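/- Let n ≥ 1, p > 2, let Ω ⊆ ℝⁿ be open and I ⊆ ℝ an open interval, and let u : Ω × I → ℝ be C² in x and C¹ in t with u > 0. Define the pressure g := ((p-1)/(p-2)) u^{(p-2)/(p-1)}. If at a point (x,t) one has ∇u(x,t) ≠ 0 and ∂_t u = |∇u|^{p-2}Δu + (p-2)|∇u|^{p-4}⟨∇u, (D²u)∇u⟩ (the expanded p-Laplacian evolution equation), then at (x,t) the pressure satisfies ∂_t g = ((p-2)/(p-1)) g ( |∇g|^{p-2}Δg + (p-2)|∇g|^{p-4}⟨∇g, (D²g)∇g⟩ ) + |∇g|^p. -/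

import Mathlib

/-!
Write `m = (p-2)/(p-1)`, so that `g = u^m / m`, and put `a = u^(m-1)`. The chain rule gives
`g_t = a u_t`, `∇g = a ∇u` and `D²g = a D²u + (m-1) (a/u) ∇u ⊗ ∇u`.
Since `(m-1)(p-1) = -1`, we have `a^(p-1) = 1/u`: the terms of `m g Δ_p g` containing `D²u` add up to
`a Δ_p u`, while the remaining ones add up to `(m-1)(p-1) (a/u) |∇u|^p = -(a/u) |∇u|^p`, which
cancels `|∇g|^p`. The derivative computations are `pd_const_mul_rpow` and `hess_pressure`, and the
final cancellation is `pressure_algebra`.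
-/


/-- The partial derivative `∂_i f` of a real-valued function on `ℝⁿ`. -/
noncomputable def pd {n : ℕ} (f : (Fin n → ℝ) → ℝ) (i : Fin n) (x : Fin n → ℝ) : ℝ :=
  fderiv ℝ f x (Pi.single i 1)

/-- The gradient `∇f` as a vector in `ℝⁿ`. -/
noncomputable def grad {n : ℕ} (f : (Fin n → ℝ) → ℝ) (x : Fin n → ℝ) : Fin n → ℝ :=
  fun i => pd f i x

/-- The Hessian entry `∂_i ∂_j f`. -/
noncomputable def hess {n : ℕ} (f : (Fin n → ℝ) → ℝ) (x : Fin n → ℝ) (i j : Fin n) : ℝ :=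
  pd (pd f j) i x

/-- The Euclidean norm of a vector of `ℝⁿ`. -/
noncomputable def nrm {n : ℕ} (q : Fin n → ℝ) : ℝ := Real.sqrt (∑ i, q i ^ 2)

theorem nrm_nonneg {n : ℕ} (q : Fin n → ℝ) : 0 ≤ nrm q := Real.sqrt_nonneg _

theorem nrm_sq {n : ℕ} (q : Fin n → ℝ) : nrm q ^ 2 = ∑ i, q i ^ 2 :=
  Real.sq_sqrt (Finset.sum_nonneg fun i _ => sq_nonneg (q i))

theorem nrm_pos {n : ℕ} {q : Fin n → ℝ} (hq : q ≠ 0) : 0 < nrm q := by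
  obtain ⟨i, hi⟩ := Function.ne_iff.mp hq
  exact Real.sqrt_pos.mpr (Finset.sum_pos' (fun j _ => sq_nonneg (q j))
    ⟨i, Finset.mem_univ i, sq_pos_of_ne_zero hi⟩)

theorem nrm_smul {n : ℕ} {a : ℝ} (ha : 0 ≤ a) (q : Fin n → ℝ) :
    nrm (a • q) = a * nrm q := by
  simp only [nrm, Pi.smul_apply, smul_eq_mul, mul_pow, ← Finset.mul_sum]
  rw [Real.sqrt_mul (sq_nonneg a), Real.sqrt_sq ha]

/-- The gradient of the pressure: the factor `m⁻¹` cancels the exponent. -/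
theorem pd_const_mul_rpow {n : ℕ} {f : (Fin n → ℝ) → ℝ} {x : Fin n → ℝ} {m : ℝ} (hm : m ≠ 0)
    (hf : DifferentiableAt ℝ f x) (h0 : 0 < f x) (i : Fin n) :
    pd (fun y => m⁻¹ * f y ^ m) i x = f x ^ (m - 1) * pd f i x := by
  have h := (hf.hasFDerivAt.rpow_const (p := m) (Or.inl h0.ne')).const_mul m⁻¹
  simp only [pd]
  rw [h.fderiv]
  simp only [FunLike.coe_smul, Pi.smul_apply, smul_eq_mul]
  field_simp

/-- The Hessian of the pressure. The formula for the gradient must hold near `x`, not just at `x`,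
before it can be differentiated, hence the open set. -/
theorem hess_pressure {n : ℕ} {f : (Fin n → ℝ) → ℝ} {Ω : Set (Fin n → ℝ)} (hΩ : IsOpen Ω)
    (hf : ContDiffOn ℝ 2 f Ω) (hpos : ∀ y ∈ Ω, 0 < f y) {m : ℝ} (hm : m ≠ 0)
    {x : Fin n → ℝ} (hx : x ∈ Ω) (i j : Fin n) :
    hess (fun y => m⁻¹ * f y ^ m) x i j = f x ^ (m - 1) * hess f x i j
      + (m - 1) * (f x ^ (m - 1) / f x) * (grad f x i * grad f x j) := by
  have hd : ∀ y ∈ Ω, DifferentiableAt ℝ f y := fun y hy =>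
    (hf.contDiffAt (hΩ.mem_nhds hy)).differentiableAt (by norm_num)
  have hev : pd (fun y => m⁻¹ * f y ^ m) j =ᶠ[nhds x] fun y => f y ^ (m - 1) * pd f j y := by
    filter_upwards [hΩ.mem_nhds hx] with y hy
    exact pd_const_mul_rpow hm (hd y hy) (hpos y hy) j
  have hdd : DifferentiableAt ℝ (pd f j) x := by
    have h1 : ContDiffAt ℝ 1 (fderiv ℝ f) x :=
      (hf.contDiffAt (hΩ.mem_nhds hx)).fderiv_right (by norm_num)
    exact (h1.differentiableAt (by norm_num)).clm_apply (differentiableAt_const _)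
  have h0 := hpos x hx
  have h := ((hd x hx).hasFDerivAt.rpow_const (p := m - 1) (Or.inl h0.ne')).mul hdd.hasFDerivAt
  have h' : fderiv ℝ (fun y => f y ^ (m - 1) * pd f j y) x = _ := h.fderiv
  simp only [hess, grad]
  rw [pd, hev.fderiv_eq, h', Real.rpow_sub_one h0.ne' (m - 1)]
  simp only [FunLike.coe_add, FunLike.coe_smul, Pi.add_apply, Pi.smul_apply, smul_eq_mul, pd]
  ring

/-- The cancellation behind the pressure equation, with `A = u`, `a = u^(m-1)`, `N = |∇u|`,
`D = Δu` and `S = ⟨∇u, (D²u)∇u⟩`. -/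
theorem pressure_algebra {p m A a N D S : ℝ} (hp : 2 < p) (hm : m = (p - 2) / (p - 1))
    (hA : 0 < A) (ha : a = A ^ (m - 1)) (hN : 0 < N) :
    a * (N ^ (p - 2) * D + (p - 2) * N ^ (p - 4) * S)
      = A ^ m * ((a * N) ^ (p - 2) * (a * D + (m - 1) * (a / A) * N ^ 2)
          + (p - 2) * (a * N) ^ (p - 4) * (a ^ 3 * S + (m - 1) * (a ^ 3 / A) * N ^ 4))
        + (a * N) ^ p := by
  have hp1 : p - 1 ≠ 0 := by linarith
  have ha0 : 0 < a := ha ▸ Real.rpow_pos_of_pos hA _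
  have hexp : (m - 1) * (p - 1) = -1 := by rw [hm]; field_simp; ring
  have hap : a ^ (p - 1) = A⁻¹ := by
    rw [ha, ← Real.rpow_mul hA.le, hexp, Real.rpow_neg_one]
  have hAm : A ^ m = a * A := by
    rw [ha, Real.rpow_sub_one hA.ne']; field_simp
  -- All powers of `a` and `N` reduce to `a^(p-4)` and `N^(p-4)`.
  have h2 : ∀ b : ℝ, 0 < b → b ^ (p - 2) = b ^ (p - 4) * b ^ 2 := fun b hb => by
    rw [← Real.rpow_natCast, ← Real.rpow_add hb]; congr 1; push_cast; ring
  have h4 : ∀ b : ℝ, 0 < b → b ^ p = b ^ (p - 4) * b ^ 4 := fun b hb => by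
    rw [← Real.rpow_natCast, ← Real.rpow_add hb]; congr 1; push_cast; ring
  have hak : a ^ (p - 4) = A⁻¹ / a ^ 3 := by
    rw [← hap, eq_div_iff (by positivity), ← Real.rpow_natCast, ← Real.rpow_add ha0]
    congr 1; push_cast; ring
  rw [h2 _ (mul_pos ha0 hN), h4 _ (mul_pos ha0 hN), h2 N hN, Real.mul_rpow ha0.le hN.le, hak, hAm]
  field_simp
  linear_combination (-N ^ 4) * hexp

/-- if `u > 0` solves the (expanded) `p`-Laplacian evolution equation at a point
where `∇u ≠ 0`, then the pressure `g = ((p-1)/(p-2)) u^{(p-2)/(p-1)}` satisfies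
`g_t = ((p-2)/(p-1)) g Δ_p g + |∇g|^p` (with `Δ_p g` expanded) at that point. -/
theorem pressure_equation (n : ℕ) (hn : 1 ≤ n) (p : ℝ) (hp : 2 < p)
    (Ω : Set (Fin n → ℝ)) (hΩ : IsOpen Ω) (I : Set ℝ) (hI : ∃ a b : ℝ, I = Set.Ioo a b)
    (u : (Fin n → ℝ) → ℝ → ℝ)
    (hux : ∀ t ∈ I, ContDiffOn ℝ 2 (fun x => u x t) Ω)
    (hut : ∀ x ∈ Ω, ContDiffOn ℝ 1 (fun t => u x t) I)
    (hupos : ∀ x ∈ Ω, ∀ t ∈ I, 0 < u x t)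
    (g : (Fin n → ℝ) → ℝ → ℝ)
    (hg : ∀ x t, g x t = ((p - 1)/(p - 2)) * u x t ^ ((p - 2)/(p - 1)))
    (x : Fin n → ℝ) (hx : x ∈ Ω) (t : ℝ) (ht : t ∈ I)
    (hgrad : grad (fun y => u y t) x ≠ 0)
    (heq : deriv (fun s => u x s) t
      = nrm (grad (fun y => u y t) x) ^ (p - 2) * (∑ i, hess (fun y => u y t) x i i)
        + (p - 2) * nrm (grad (fun y => u y t) x) ^ (p - 4) *
            (∑ i, ∑ j, grad (fun y => u y t) x i * hess (fun y => u y t) x i j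
              * grad (fun y => u y t) x j)) :
    deriv (fun s => g x s) t
      = ((p - 2)/(p - 1)) * g x t *
          (nrm (grad (fun y => g y t) x) ^ (p - 2) * (∑ i, hess (fun y => g y t) x i i)
            + (p - 2) * nrm (grad (fun y => g y t) x) ^ (p - 4) *
                (∑ i, ∑ j, grad (fun y => g y t) x i * hess (fun y => g y t) x i j
                  * grad (fun y => g y t) x j))
        + nrm (grad (fun y => g y t) x) ^ p := by
  set m := (p - 2) / (p - 1) with hm
  have hm0 : m ≠ 0 := (div_pos (by linarith) (by linarith)).ne'
  have hinv : (p - 1) / (p - 2) = m⁻¹ := by rw [hm, inv_div]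
  rw [hinv] at hg
  have hgx : (fun y => g y t) = fun y => m⁻¹ * u y t ^ m := funext fun y => hg y t
  have hA : 0 < u x t := hupos x hx t ht
  have hIo : IsOpen I := by
    obtain ⟨a, b, rfl⟩ := hI
    exact isOpen_Ioo
  have hut' : HasDerivAt (fun s => u x s) (deriv (fun s => u x s) t) t :=
    (((hut x hx).contDiffAt (hIo.mem_nhds ht)).differentiableAt (by norm_num)).hasDerivAt
  have hgt : deriv (fun s => g x s) t = u x t ^ (m - 1) * deriv (fun s => u x s) t := by
    have h := (hut'.rpow_const (p := m) (Or.inl hA.ne')).const_mul m⁻¹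
    rw [funext fun s => hg x s, h.deriv]
    field_simp
  have hd : DifferentiableAt ℝ (fun y => u y t) x :=
    ((hux t ht).contDiffAt (hΩ.mem_nhds hx)).differentiableAt (by norm_num)
  have hgr : grad (fun y => g y t) x = u x t ^ (m - 1) • grad (fun y => u y t) x := by
    rw [hgx]
    exact funext fun i => pd_const_mul_rpow hm0 hd hA i
  have hh : ∀ i j, hess (fun y => g y t) x i j
      = u x t ^ (m - 1) * hess (fun y => u y t) x i j
        + (m - 1) * (u x t ^ (m - 1) / u x t)
          * (grad (fun y => u y t) x i * grad (fun y => u y t) x j) := fun i j => by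
    rw [hgx]
    exact hess_pressure hΩ (hux t ht) (fun y hy => hupos y hy t ht) hm0 hx i j
  have ha : 0 < u x t ^ (m - 1) := Real.rpow_pos_of_pos hA _
  have hmg : m * g x t = u x t ^ m := by rw [hg]; field_simp
  have hsq := nrm_sq (grad (fun y => u y t) x)
  have hN := nrm_pos hgrad
  rw [hgt, heq, hmg, hgr, nrm_smul ha.le]
  simp only [hh, Pi.smul_apply, smul_eq_mul]
  set a := u x t ^ (m - 1) with ha'
  set q := grad (fun y => u y t) x
  set H := hess (fun y => u y t) x
  set N := nrm q
  have hlap : ∑ i, (a * H i i + (m - 1) * (a / u x t) * (q i * q i))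
      = a * ∑ i, H i i + (m - 1) * (a / u x t) * N ^ 2 := by
    rw [Finset.sum_add_distrib, ← Finset.mul_sum, ← Finset.mul_sum, hsq]
    simp only [sq]
  have hquad : ∑ i, ∑ j, a * q i * (a * H i j + (m - 1) * (a / u x t) * (q i * q j)) * (a * q j)
      = a ^ 3 * ∑ i, ∑ j, q i * H i j * q j + (m - 1) * (a ^ 3 / u x t) * N ^ 4 := by
    have h4 : N ^ 4 = ∑ i, ∑ j, q i ^ 2 * q j ^ 2 := by
      rw [← Finset.sum_mul_sum, ← hsq]; ring
    rw [h4]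
    simp only [Finset.mul_sum, ← Finset.sum_add_distrib]
    refine Finset.sum_congr rfl fun i _ => Finset.sum_congr rfl fun j _ => ?_
    ring
  rw [hlap, hquad]
  exact pressure_algebra hp hm hA ha' hN
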